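/- The classification error function E attains its minimum over nonzero vectors: there exists a nonzero α₀ ∈ ℝ^p such that E(α₀) ≤ E(α) for every nonzero α ∈ ℝ^p. -/

import Mathlib

open MeasureTheory ProbabilityTheory Matrix Filter Set

noncomputable def Phi (t : ℝ) : ℝ := ((gaussianReal 0 1) (Set.Iic t)).toReal
noncomputable def calE (r g : ℝ) : ℝ :=
  if g = 1 then Phi (-(|r| / 2))
  else
    1/2
      + (1/2) * Phi ((r - g * Real.sqrt (r^2 + (g^2 - 1) * Real.log (g^2))) / (g^2 - 1))
      - (1/2) * Phi ((r + g * Real.sqrt (r^2 + (g^2 - 1) * Real.log (g^2))) / (g^2 - 1))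
      + (1/2) * Phi ((r * g + Real.sqrt (r^2 + (g^2 - 1) * Real.log (g^2))) / (g^2 - 1))
      - (1/2) * Phi ((r * g - Real.sqrt (r^2 + (g^2 - 1) * Real.log (g^2))) / (g^2 - 1))
noncomputable def Evec {p : ℕ} (μ0 μ1 : Fin p → ℝ) (S0 S1 : Matrix (Fin p) (Fin p) ℝ)
    (α : Fin p → ℝ) : ℝ :=
  calE ((dotProduct α μ0 - dotProduct α μ1) / Real.sqrt (dotProduct α (S1.mulVec α)))
    (Real.sqrt (dotProduct α (S0.mulVec α)) / Real.sqrt (dotProduct α (S1.mulVec α)))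

lemma gaussianPDF_le_one (x : ℝ) : gaussianPDF 0 1 x ≤ 1 := by
  rw [gaussianPDF, ENNReal.ofReal_le_one, gaussianPDFReal]
  have h1 : (1:ℝ) ≤ √(2 * Real.pi * ((1:NNReal):ℝ)) := by
    rw [Real.one_le_sqrt]
    have := Real.pi_gt_three
    push_cast
    linarith
  have h2 : Real.exp (-(x - 0) ^ 2 / (2 * ((1:NNReal):ℝ))) ≤ 1 := by
    rw [Real.exp_le_one_iff]
    have := sq_nonneg (x - 0)
    push_cast
    linarith
  have h3 : (√(2 * Real.pi * ((1:NNReal):ℝ)))⁻¹ ≤ 1 := inv_le_one_of_one_le₀ h1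
  exact mul_le_one₀ h3 (Real.exp_pos _).le h2

lemma Phi_sub_le {a b : ℝ} (h : a ≤ b) : |Phi b - Phi a| ≤ b - a := by
  have h1 : Phi b = Phi a + ((gaussianReal 0 1) (Set.Ioc a b)).toReal := by
    unfold Phi
    rw [← ENNReal.toReal_add (measure_ne_top _ _) (measure_ne_top _ _),
      ← measure_union (Set.Iic_disjoint_Ioc le_rfl) measurableSet_Ioc, Set.Iic_union_Ioc_eq_Iic h]
  have h2 : (gaussianReal 0 1) (Set.Ioc a b) ≤ ENNReal.ofReal (b - a) := by
    rw [gaussianReal_apply 0 one_ne_zero]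
    calc ∫⁻ x in Set.Ioc a b, gaussianPDF 0 1 x ≤ ∫⁻ x in Set.Ioc a b, 1 :=
          lintegral_mono gaussianPDF_le_one
      _ = ENNReal.ofReal (b - a) := by simp
  have h3 := ENNReal.toReal_mono ENNReal.ofReal_ne_top h2
  rw [ENNReal.toReal_ofReal (by linarith)] at h3
  rw [h1, add_sub_cancel_left, abs_of_nonneg ENNReal.toReal_nonneg]
  exact h3

lemma Phi_lip (a b : ℝ) : |Phi a - Phi b| ≤ |a - b| := by
  rcases le_total a b with h | h
  · rw [abs_sub_comm, abs_sub_comm a b, abs_of_nonneg (sub_nonneg.2 h)]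
    exact Phi_sub_le h
  · rw [abs_of_nonneg (sub_nonneg.2 h)]
    exact Phi_sub_le h

lemma Phi_cont : Continuous Phi := by
  have : LipschitzWith 1 Phi := LipschitzWith.of_dist_le_mul fun a b => by
    simpa [Real.dist_eq] using Phi_lip a b
  exact this.continuous

lemma Phi_neg (x : ℝ) : Phi (-x) = 1 - Phi x := by
  have h1 : (gaussianReal 0 1) (Set.Iic (-x)) = (gaussianReal 0 1) (Set.Ici x) := by
    have h := gaussianReal_map_neg (μ := 0) (v := 1)
    rw [neg_zero] at h
    conv_lhs => rw [← h]
    rw [Measure.map_apply measurable_neg measurableSet_Iic]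
    congr 1
    ext y
    simp
  have : NullSingletonClass (gaussianReal 0 1) := nullSingletonClass_gaussianReal one_ne_zero
  have h2 : (gaussianReal 0 1) (Set.Ici x) = (gaussianReal 0 1) (Set.Iic x)ᶜ := by
    rw [Set.compl_Iic]
    exact measure_congr Ioi_ae_eq_Ici.symm
  unfold Phi
  rw [h1, h2, prob_compl_eq_one_sub measurableSet_Iic,
    ENNReal.toReal_sub_of_le prob_le_one ENNReal.one_ne_top]
  simp

lemma Phi_zero : Phi 0 = 1/2 := by
  have := Phi_neg 0
  rw [neg_zero] at this
  linarith

lemma calE_neg (r g : ℝ) : calE (-r) g = calE r g := by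
  unfold calE
  rw [abs_neg, neg_sq]
  split_ifs with h
  · rfl
  set s := Real.sqrt (r^2 + (g^2 - 1) * Real.log (g^2))
  have e1 : (-r - g * s) / (g^2-1) = -((r + g * s) / (g^2-1)) := by ring
  have e2 : (-r + g * s) / (g^2-1) = -((r - g * s) / (g^2-1)) := by ring
  have e3 : (-r * g + s) / (g^2-1) = -((r * g - s) / (g^2-1)) := by ring
  have e4 : (-r * g - s) / (g^2-1) = -((r * g + s) / (g^2-1)) := by ring
  rw [e1, e2, e3, e4, Phi_neg, Phi_neg, Phi_neg, Phi_neg]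
  ring

noncomputable def sqD (x : ℝ × ℝ) : ℝ :=
  Real.sqrt (x.1^2 + (x.2^2 - 1) * Real.log (x.2^2))

lemma sqD_cont (x : ℝ × ℝ) (h : 0 < x.2) : ContinuousAt sqD x := by
  unfold sqD
  have : x.2 ^ 2 ≠ 0 := by positivity
  fun_prop (disch := assumption)

lemma delta_nonneg (r g : ℝ) (hg : 0 < g) : 0 ≤ r^2 + (g^2 - 1) * Real.log (g^2) := by
  have : 0 ≤ (g^2 - 1) * Real.log (g^2) := by
    rcases le_total 1 (g^2) with h | h
    · exact mul_nonneg (by linarith) (Real.log_nonneg h)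
    · exact mul_nonneg_of_nonpos_of_nonpos (by linarith) (Real.log_nonpos (by positivity) h)
  positivity

lemma d_ne {g : ℝ} (hg : 0 < g) (h : g ≠ 1) : g^2 - 1 ≠ 0 := by
  intro hzero
  have : (g - 1) * (g + 1) = 0 := by linarith
  rcases mul_eq_zero.1 this with hfac | hfac
  · exact h (by linarith)
  · linarith

lemma dAB (r g s : ℝ) (hg : 0 < g) (h : g ≠ 1) :
    (r * g + s) / (g^2 - 1) - (r + g * s) / (g^2 - 1) = (r - s) / (1 + g) := by
  have := d_ne hg h
  have : 1 + g ≠ 0 := by positivity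
  field_simp
  ring

lemma dABneg (r g s : ℝ) (hg : 0 < g) (h : g ≠ 1) :
    (r - g * s) / (g^2 - 1) - (r * g - s) / (g^2 - 1) = -((r + s) / (1 + g)) := by
  have := d_ne hg h
  have : 1 + g ≠ 0 := by positivity
  field_simp
  ring

lemma bound0 (r g : ℝ) (hg : 0 < g) : |calE r g - 1/2| ≤ (|r| + sqD (r, g)) / (1 + g) := by
  have hs : 0 ≤ sqD (r, g) := Real.sqrt_nonneg _
  by_cases h : g = 1
  · have h1 := Phi_lip (-(|r|/2)) 0
    rw [Phi_zero] at h1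
    rw [calE, if_pos h, h]
    rw [h] at hs
    rw [sub_zero, abs_neg, abs_of_nonneg (show 0 ≤ |r| / 2 by positivity)] at h1
    refine h1.trans ?_
    linarith
  · have h1 := Phi_lip ((r - g * sqD (r, g)) / (g^2-1)) ((r * g - sqD (r, g)) / (g^2-1))
    have h2 := Phi_lip ((r * g + sqD (r, g)) / (g^2-1)) ((r + g * sqD (r, g)) / (g^2-1))
    rw [dABneg _ _ _ hg h, abs_neg, abs_div, abs_of_pos (show 0 < 1 + g by linarith)] at h1
    rw [dAB _ _ _ hg h, abs_div, abs_of_pos (show 0 < 1 + g by linarith)] at h2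
    have h3 : |r + sqD (r, g)| / (1+g) ≤ (|r| + sqD (r, g)) / (1 + g) := by
      gcongr
      exact (abs_add_le _ _).trans (by rw [abs_of_nonneg hs])
    have h4 : |r - sqD (r, g)| / (1+g) ≤ (|r| + sqD (r, g)) / (1 + g) := by
      gcongr
      exact (abs_sub _ _).trans (by rw [abs_of_nonneg hs])
    rw [calE, if_neg h]
    change |1/2 + (1/2) * Phi ((r - g * sqD (r, g)) / (g^2-1))
      - (1/2) * Phi ((r + g * sqD (r, g)) / (g^2-1))
      + (1/2) * Phi ((r * g + sqD (r, g)) / (g^2-1))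
      - (1/2) * Phi ((r * g - sqD (r, g)) / (g^2-1)) - 1/2| ≤ _
    rw [abs_le] at h1 h2 ⊢
    constructor <;> linarith [h1.1, h1.2, h2.1, h2.2]

noncomputable def mainE (x : ℝ × ℝ) : ℝ :=
  1/2 + (1/2) * Phi ((-x.1^2 - x.2^2 * Real.log (x.2^2)) / (x.1 + x.2 * sqD x))
    - (1/2) * Phi ((x.1^2 - Real.log (x.2^2)) / (x.1 * x.2 + sqD x))

lemma mainE_cont (x : ℝ × ℝ) (h1 : 0 < x.1) (h : 0 < x.2) : ContinuousAt mainE x := by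
  unfold mainE
  have h3 : x.2 ^ 2 ≠ 0 := by positivity
  have hs := sqD_cont x h
  have hs0 : 0 ≤ sqD x := Real.sqrt_nonneg _
  have h4 : x.1 + x.2 * sqD x ≠ 0 := by positivity
  have h5 : x.1 * x.2 + sqD x ≠ 0 := by positivity
  have c1 : ContinuousAt (fun x : ℝ × ℝ => 
    (-x.1^2 - x.2^2 * Real.log (x.2^2)) / (x.1 + x.2 * sqD x)) x := by
    fun_prop (disch := assumption)
  have c2 : ContinuousAt (fun x : ℝ × ℝ => 
    (x.1^2 - Real.log (x.2^2)) / (x.1 * x.2 + sqD x)) x := by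
    fun_prop (disch := assumption)
  exact (continuousAt_const.add (continuousAt_const.mul (Phi_cont.continuousAt.comp c1))).sub
    (continuousAt_const.mul (Phi_cont.continuousAt.comp c2))

lemma bound1 (r g : ℝ) (hr : 0 < r) (hg : 0 < g) :
    |calE r g - mainE (r, g)| ≤ |r - sqD (r, g)| / (1 + g) := by
  have hs : 0 ≤ sqD (r, g) := Real.sqrt_nonneg _
  by_cases h : g = 1
  · subst h
    have : sqD (r, 1) = r := by simp [sqD, hr.le]
    rw [calE, if_pos rfl, mainE, this]
    have e1 : (-r^2 - 1^2 * Real.log (1^2)) / (r + 1 * r) = -(r/2) := by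
      simp; field_simp; ring
    have e2 : (r^2 - Real.log (1^2)) / (r * 1 + r) = r/2 := by
      simp; field_simp; ring
    simp only [e1, e2, abs_of_pos hr, Phi_neg]
    ring_nf
    simp
  · have h2 := Phi_lip ((r * g + sqD (r, g)) / (g^2-1)) ((r + g * sqD (r, g)) / (g^2-1))
    rw [dAB _ _ _ hg h, abs_div, abs_of_pos (show 0 < 1 + g by linarith)] at h2
    have hd := d_ne hg h
    have hsq : sqD (r, g) ^ 2 = r^2 + (g^2 - 1) * Real.log (g^2) :=
      Real.sq_sqrt (delta_nonneg r g hg)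
    have e1 : (-r^2 - g^2 * Real.log (g^2)) / (r + g * sqD (r, g))
        = (r - g * sqD (r, g)) / (g^2-1) := by
      rw [div_eq_div_iff (by positivity) hd]
      linear_combination g^2 * hsq
    have e2 : (r^2 - Real.log (g^2)) / (r * g + sqD (r, g))
        = (r * g - sqD (r, g)) / (g^2-1) := by
      rw [div_eq_div_iff (by positivity) hd]
      linear_combination hsq
    rw [calE, if_neg h, mainE]
    simp only [e1, e2]
    change |1/2 + (1/2) * Phi ((r - g * sqD (r, g)) / (g^2-1))
      - (1/2) * Phi ((r + g * sqD (r, g)) / (g^2-1))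
      + (1/2) * Phi ((r * g + sqD (r, g)) / (g^2-1))
      - (1/2) * Phi ((r * g - sqD (r, g)) / (g^2-1)) - _| ≤ _
    have h5 : 0 ≤ |r - sqD (r, g)| / (1+g) := by positivity
    rw [abs_le] at h2 ⊢
    constructor <;> linarith [h2.1, h2.2]

lemma cont_pos (r : ℝ) (hr : 0 < r) : ContinuousAt (fun x : ℝ × ℝ => calE x.1 x.2) (r, 1) := by
  have hz : Tendsto (fun x : ℝ × ℝ => calE x.1 x.2 - mainE x) (nhds (r, 1)) (nhds 0) := by
    have hb : ContinuousAt (fun x : ℝ × ℝ => |x.1 - sqD x| / (1 + x.2)) (r, 1) := by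
      have hs := sqD_cont (r, 1) one_pos
      have : (1:ℝ) + ((r, 1) : ℝ × ℝ).2 ≠ 0 := by norm_num
      fun_prop (disch := assumption)
    have hbt := hb.tendsto
    have : sqD (r, 1) = r := by simp [sqD, hr.le]
    simp only [this, sub_self, abs_zero, zero_div] at hbt
    refine squeeze_zero_norm' ?_ hbt
    have n1 : ∀ᶠ x : ℝ × ℝ in nhds (r, 1), 0 < x.1 :=
      continuousAt_fst.eventually (lt_mem_nhds hr)
    have n2 : ∀ᶠ x : ℝ × ℝ in nhds (r, 1), 0 < x.2 :=
      continuousAt_snd.eventually (lt_mem_nhds one_pos)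
    filter_upwards [n1, n2] with x hx1 hx2
    exact bound1 x.1 x.2 hx1 hx2
  have hm := (mainE_cont (r, 1) hr one_pos).tendsto
  have h := hz.add hm
  simp only [sub_add_cancel, zero_add] at h
  have hv : calE r 1 = mainE (r, 1) := by
    have h1 := bound1 r 1 hr one_pos
    have : sqD (r, 1) = r := by simp [sqD, hr.le]
    rw [this, sub_self, abs_zero, zero_div] at h1
    exact sub_eq_zero.1 (abs_eq_zero.1 (le_antisymm h1 (abs_nonneg _)))
  rw [ContinuousAt]
  simpa only [hv] using h

lemma cont_zero : ContinuousAt (fun x : ℝ × ℝ => calE x.1 x.2) (0, 1) := by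
  have hz : Tendsto (fun x : ℝ × ℝ => calE x.1 x.2 - 1/2) (nhds (0, 1)) (nhds 0) := by
    have hb : ContinuousAt (fun x : ℝ × ℝ => (|x.1| + sqD x) / (1 + x.2)) (0, 1) := by
      have hs := sqD_cont (0, 1) one_pos
      have : (1:ℝ) + ((0, 1) : ℝ × ℝ).2 ≠ 0 := by norm_num
      fun_prop (disch := assumption)
    have hbt := hb.tendsto
    have : sqD (0, 1) = 0 := by simp [sqD]
    simp only [this, abs_zero, add_zero, zero_div] at hbt
    refine squeeze_zero_norm' ?_ hbt
    have n2 : ∀ᶠ x : ℝ × ℝ in nhds (0, 1), 0 < x.2 :=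
      continuousAt_snd.eventually (lt_mem_nhds one_pos)
    filter_upwards [n2] with x hx2
    exact bound0 x.1 x.2 hx2
  have h := hz.add_const (1/2)
  simp only [sub_add_cancel, zero_add] at h
  have hv : calE 0 1 = 1/2 := by simp [calE, Phi_zero]
  rw [ContinuousAt]
  simpa only [hv] using h

lemma cont_one (r : ℝ) : ContinuousAt (fun x : ℝ × ℝ => calE x.1 x.2) (r, 1) := by
  rcases lt_trichotomy r 0 with h | h | h
  · have h1 := cont_pos (-r) (by linarith)
    have h2 : ContinuousAt (fun x : ℝ × ℝ => ((-x.1, x.2) : ℝ × ℝ)) (r, 1) := by fun_prop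
    have h3 := ContinuousAt.comp (f := fun x : ℝ × ℝ => ((-x.1, x.2) : ℝ × ℝ)) (x := (r, 1)) h1 h2
    simpa only [Function.comp_def, calE_neg] using h3
  · subst h
    exact cont_zero
  · exact cont_pos r h

lemma cont_ne (r g : ℝ) (hg : 0 < g) (h : g ≠ 1) :
    ContinuousAt (fun x : ℝ × ℝ => calE x.1 x.2) (r, g) := by
  have hs := sqD_cont (r, g) hg
  have hd : ((r, g) : ℝ × ℝ).2 ^ 2 - 1 ≠ 0 := d_ne hg h
  have c1 : ContinuousAt (fun x : ℝ × ℝ => (x.1 - x.2 * sqD x) / (x.2^2 - 1)) (r, g) := by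
    fun_prop (disch := assumption)
  have c2 : ContinuousAt (fun x : ℝ × ℝ => (x.1 + x.2 * sqD x) / (x.2^2 - 1)) (r, g) := by
    fun_prop (disch := assumption)
  have c3 : ContinuousAt (fun x : ℝ × ℝ => (x.1 * x.2 + sqD x) / (x.2^2 - 1)) (r, g) := by
    fun_prop (disch := assumption)
  have c4 : ContinuousAt (fun x : ℝ × ℝ => (x.1 * x.2 - sqD x) / (x.2^2 - 1)) (r, g) := by
    fun_prop (disch := assumption)
  have hc := (((continuousAt_const (y := (1/2 : ℝ))).add
    ((continuousAt_const (y := (1/2 : ℝ))).mul (Phi_cont.continuousAt.comp c1))).sub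
    ((continuousAt_const (y := (1/2 : ℝ))).mul (Phi_cont.continuousAt.comp c2))).add
    ((continuousAt_const (y := (1/2 : ℝ))).mul (Phi_cont.continuousAt.comp c3)) |>.sub
    ((continuousAt_const (y := (1/2 : ℝ))).mul (Phi_cont.continuousAt.comp c4))
  refine hc.congr ?_
  have n2 : ∀ᶠ x : ℝ × ℝ in nhds (r, g), x.2 ≠ 1 :=
    continuousAt_snd.eventually_ne h
  filter_upwards [n2] with x hx
  rw [calE, if_neg hx]
  rfl

lemma calE_cont (r g : ℝ) (hg : 0 < g) :
    ContinuousAt (fun x : ℝ × ℝ => calE x.1 x.2) (r, g) := by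
  by_cases h : g = 1
  · subst h
    exact cont_one r
  · exact cont_ne r g hg h

lemma quad_pos {p : ℕ} {S : Matrix (Fin p) (Fin p) ℝ} (h : S.PosDef) {α : Fin p → ℝ}
    (hα : α ≠ 0) : 0 < dotProduct α (S.mulVec α) := by
  simpa using h.dotProduct_mulVec_pos hα

lemma Evec_cont {p : ℕ} (μ0 μ1 : Fin p → ℝ)
    (S0 S1 : Matrix (Fin p) (Fin p) ℝ) (h0 : S0.PosDef) (h1 : S1.PosDef)
    (α : Fin p → ℝ) (hα : α ≠ 0) : ContinuousAt (Evec μ0 μ1 S0 S1) α := by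
  have q0 := Real.sqrt_pos.2 (quad_pos h0 hα)
  have q1 := Real.sqrt_pos.2 (quad_pos h1 hα)
  have hqne := q1.ne'
  have hq : ∀ S : Matrix (Fin p) (Fin p) ℝ,
      Continuous (fun α : Fin p → ℝ => Real.sqrt (dotProduct α (S.mulVec α))) := fun S =>
    Real.continuous_sqrt.comp
      (Continuous.dotProduct continuous_id (Continuous.matrix_mulVec continuous_const continuous_id))
  have hl : ∀ m : Fin p → ℝ, Continuous (fun α : Fin p → ℝ => dotProduct α m) := fun m =>
    Continuous.dotProduct continuous_id continuous_const
  have c1 : ContinuousAt (fun α : Fin p → ℝ =>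
      (dotProduct α μ0 - dotProduct α μ1) / Real.sqrt (dotProduct α (S1.mulVec α))) α :=
    ((hl μ0).sub (hl μ1)).continuousAt.div (hq S1).continuousAt hqne
  have c2 : ContinuousAt (fun α : Fin p → ℝ =>
      Real.sqrt (dotProduct α (S0.mulVec α)) / Real.sqrt (dotProduct α (S1.mulVec α))) α :=
    (hq S0).continuousAt.div (hq S1).continuousAt hqne
  exact ContinuousAt.comp (f := fun α : Fin p → ℝ =>
      ((dotProduct α μ0 - dotProduct α μ1) / Real.sqrt (dotProduct α (S1.mulVec α)),
      Real.sqrt (dotProduct α (S0.mulVec α)) / Real.sqrt (dotProduct α (S1.mulVec α))))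
      (calE_cont _ _ (div_pos q0 q1)) (c1.prodMk c2)

lemma Evec_smul {p : ℕ} (μ0 μ1 : Fin p → ℝ)
    (S0 S1 : Matrix (Fin p) (Fin p) ℝ) (c : ℝ) (hc : 0 < c)
    (α : Fin p → ℝ) : Evec μ0 μ1 S0 S1 (c • α) = Evec μ0 μ1 S0 S1 α := by
  have hq : ∀ S : Matrix (Fin p) (Fin p) ℝ,
      Real.sqrt (dotProduct (c • α) (S.mulVec (c • α)))
        = c * Real.sqrt (dotProduct α (S.mulVec α)) := by
    intro S
    rw [Matrix.mulVec_smul, smul_dotProduct, dotProduct_smul, smul_eq_mul, smul_eq_mul,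
      ← mul_assoc, Real.sqrt_mul (by positivity), Real.sqrt_mul_self hc.le]
  unfold Evec
  rw [hq, hq, smul_dotProduct, smul_dotProduct, smul_eq_mul, smul_eq_mul, ← mul_sub,
    mul_div_mul_left _ _ (ne_of_gt hc), mul_div_mul_left _ _ (ne_of_gt hc)]

/-- E attains its minimum over nonzero vectors. -/
theorem Evec_exists_min {p : ℕ} (hp : 1 ≤ p) (μ0 μ1 : Fin p → ℝ)
    (S0 S1 : Matrix (Fin p) (Fin p) ℝ) (h0 : S0.PosDef) (h1 : S1.PosDef) :
    ∃ α0 : Fin p → ℝ, α0 ≠ 0 ∧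
      ∀ α : Fin p → ℝ, α ≠ 0 → Evec μ0 μ1 S0 S1 α0 ≤ Evec μ0 μ1 S0 S1 α := by
  have : Nonempty (Fin p) := ⟨⟨0, hp⟩⟩
  have hne : (Metric.sphere (0 : Fin p → ℝ) 1).Nonempty := by
    refine ⟨fun _ => 1, ?_⟩
    rw [mem_sphere_zero_iff_norm, pi_norm_const]
    simp
  have hnz : ∀ α ∈ Metric.sphere (0 : Fin p → ℝ) 1, α ≠ 0 := fun α hα =>
    ne_zero_of_mem_unit_sphere ⟨α, hα⟩
  obtain ⟨α0, hα0, hmin⟩ := (isCompact_sphere (0 : Fin p → ℝ) 1).exists_isMinOn hne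
    (f := Evec μ0 μ1 S0 S1)
    (fun α hα => (Evec_cont μ0 μ1 S0 S1 h0 h1 α (hnz α hα)).continuousWithinAt)
  refine ⟨α0, hnz α0 hα0, fun α hα => ?_⟩
  have hn : 0 < ‖α‖⁻¹ := inv_pos.2 (norm_pos_iff.2 hα)
  rw [← Evec_smul μ0 μ1 S0 S1 ‖α‖⁻¹ hn α]
  apply hmin
  rw [mem_sphere_zero_iff_norm, norm_smul, norm_inv, norm_norm,
    inv_mul_cancel₀ (norm_ne_zero_iff.2 hα)]
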